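/- arXiv:2506.18713 — 3 statements merged into one kernel-verified Lean document; each statement's English description precedes it below -/
import Mathlib

section
/- Let M ∈ K^{q×p} be full-rank with q ≤ p (i.e., M is invertible or surjective), so that MM⁺ = I_q. Then the tensor-tensor multiplication *_M is associative: for all A ∈ K^{m×n×p}, B ∈ K^{n×s×p} and C ∈ K^{s×r×p}, (A *_M B) *_M C = A *_M (B *_M C). -/
open Matrix

/-- Mode-3 product of a third-order tensor (stack of `p` frontal slices)
with a matrix `M ∈ K^{q×p}`: `(A ×₃ M)ₖ = Σ_l M k l • A l`. -/
def mode3 {K : Type*} [Semiring K] {m n p q : ℕ} (M : Matrix (Fin q) (Fin p) K)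
    (A : Fin p → Matrix (Fin m) (Fin n) K) : Fin q → Matrix (Fin m) (Fin n) K :=
  fun k => ∑ l, M k l • A l

/-- Face-wise product of two third-order tensors. -/
def facewise {K : Type*} [Semiring K] {m n s p : ℕ}
    (A : Fin p → Matrix (Fin m) (Fin n) K) (B : Fin p → Matrix (Fin n) (Fin s) K) :
    Fin p → Matrix (Fin m) (Fin s) K :=
  fun i => A i * B i

/-- Tensor-tensor multiplication `A *_M B = ((A ×₃ M) △ (B ×₃ M)) ×₃ M⁺`. -/
def tmul3 {K : Type*} [Semiring K] {m n s p q : ℕ} (M : Matrix (Fin q) (Fin p) K)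
    (Mp : Matrix (Fin p) (Fin q) K)
    (A : Fin p → Matrix (Fin m) (Fin n) K) (B : Fin p → Matrix (Fin n) (Fin s) K) :
    Fin p → Matrix (Fin m) (Fin s) K :=
  mode3 Mp (facewise (mode3 M A) (mode3 M B))

section Semiring

variable {K : Type*} [Semiring K] {m n s r p q t : ℕ}

theorem mode3_mode3 (M : Matrix (Fin q) (Fin p) K) (N : Matrix (Fin p) (Fin t) K)
    (A : Fin t → Matrix (Fin m) (Fin n) K) : mode3 M (mode3 N A) = mode3 (M * N) A := by
  funext k
  calc ∑ l, M k l • ∑ j, N l j • A j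
      = ∑ l, ∑ j, (M k l * N l j) • A j := by simp only [Finset.smul_sum, smul_smul]
    _ = ∑ j, ∑ l, (M k l * N l j) • A j := Finset.sum_comm
    _ = ∑ j, (M * N) k j • A j := by simp only [Matrix.mul_apply, Finset.sum_smul]

theorem mode3_one (A : Fin p → Matrix (Fin m) (Fin n) K) : mode3 1 A = A := by
  funext k
  simp [mode3, Matrix.one_apply, ite_smul]

theorem facewise_assoc (A : Fin p → Matrix (Fin m) (Fin n) K)
    (B : Fin p → Matrix (Fin n) (Fin s) K) (C : Fin p → Matrix (Fin s) (Fin r) K) :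
    facewise (facewise A B) C = facewise A (facewise B C) :=
  funext fun i => Matrix.mul_assoc (A i) (B i) (C i)

theorem mode3_tmul3 {M : Matrix (Fin q) (Fin p) K} {Mp : Matrix (Fin p) (Fin q) K}
    (hMp : M * Mp = 1) (A : Fin p → Matrix (Fin m) (Fin n) K)
    (B : Fin p → Matrix (Fin n) (Fin s) K) :
    mode3 M (tmul3 M Mp A B) = facewise (mode3 M A) (mode3 M B) := by
  rw [tmul3, mode3_mode3, hMp, mode3_one]

theorem tmul3_assoc_general {M : Matrix (Fin q) (Fin p) K} {Mp : Matrix (Fin p) (Fin q) K}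
    (hMp : M * Mp = 1) (A : Fin p → Matrix (Fin m) (Fin n) K)
    (B : Fin p → Matrix (Fin n) (Fin s) K) (C : Fin p → Matrix (Fin s) (Fin r) K) :
    tmul3 M Mp (tmul3 M Mp A B) C = tmul3 M Mp A (tmul3 M Mp B C) :=
  calc mode3 Mp (facewise (mode3 M (tmul3 M Mp A B)) (mode3 M C))
      = mode3 Mp (facewise (facewise (mode3 M A) (mode3 M B)) (mode3 M C)) := by
        rw [mode3_tmul3 hMp]
    _ = mode3 Mp (facewise (mode3 M A) (facewise (mode3 M B) (mode3 M C))) := by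
        rw [facewise_assoc]
    _ = mode3 Mp (facewise (mode3 M A) (mode3 M (tmul3 M Mp B C))) := by
        rw [mode3_tmul3 hMp]

end Semiring

/-- for a full-rank `M ∈ K^{q×p}` with `q ≤ p` (invertible or surjective),
so that `M M⁺ = I_q`, the tensor-tensor multiplication `*_M` is associative. -/
theorem tmul3_assoc {K : Type*} [RCLike K] {m n s r p q : ℕ} (hq : q ≤ p)
    (M : Matrix (Fin q) (Fin p) K) (hrank : M.rank = q)
    (Mp : Matrix (Fin p) (Fin q) K) (hMp : M * Mp = 1)
    (A : Fin p → Matrix (Fin m) (Fin n) K) (B : Fin p → Matrix (Fin n) (Fin s) K)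
    (C : Fin p → Matrix (Fin s) (Fin r) K) :
    tmul3 M Mp (tmul3 M Mp A B) C = tmul3 M Mp A (tmul3 M Mp B C) :=
  tmul3_assoc_general hMp A B C
end

section
/- Let M ∈ K^{q×p} be full-rank with q > p (injective), and let n ≥ 1. A *_M-identity tensor in K^{n×n×p} exists if and only if the all-ones vector (1,1,…,1) ∈ K^q lies in the column space of M (equivalently, in the image of the map x ↦ Mx from K^p to K^q). -/
open Matrix

section mode3

variable {K : Type*} [Semiring K] {m n p q : ℕ} (M : Matrix (Fin q) (Fin p) K)

theorem mode3_apply_apply (A : Fin p → Matrix (Fin m) (Fin n) K) (k : Fin q) (i : Fin m)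
    (j : Fin n) : mode3 M A k i j = (M *ᵥ fun l => A l i j) k := by
  simp only [mode3, Matrix.sum_apply, Matrix.smul_apply, smul_eq_mul, mulVec, dotProduct]

theorem mode3_smul_const (x : Fin p → K) (B : Matrix (Fin m) (Fin n) K) (k : Fin q) :
    mode3 M (fun l => x l • B) k = (M *ᵥ x) k • B := by
  simp only [mode3, smul_smul, ← Finset.sum_smul, mulVec, dotProduct]

theorem identity_exists_iff_allOnes_mem_range_general (hn : 0 < n) :
    (∃ I : Fin p → Matrix (Fin n) (Fin n) K, ∀ i, mode3 M I i = 1) ↔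
      (∃ x : Fin p → K, M.mulVec x = fun _ => 1) := by
  constructor
  · rintro ⟨I, hI⟩
    let i₀ : Fin n := ⟨0, hn⟩
    refine ⟨fun l => I l i₀ i₀, funext fun k => ?_⟩
    rw [← mode3_apply_apply, hI, one_apply_eq]
  · rintro ⟨x, hx⟩
    refine ⟨fun l => x l • 1, fun k => ?_⟩
    rw [mode3_smul_const, hx, one_smul]

end mode3

/-- for a full-rank injective `M ∈ K^{q×p}` (`q > p`) and `n ≥ 1`,
a `*_M`-identity tensor in `K^{n×n×p}` exists if and only if the all-ones vector of
`K^q` lies in the column space of `M`. -/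
theorem identity_exists_iff_allOnes_mem_range {K : Type*} [RCLike K] {n p q : ℕ}
    (hq : p < q) (hn : 0 < n)
    (M : Matrix (Fin q) (Fin p) K) (hrank : M.rank = p) :
    (∃ I : Fin p → Matrix (Fin n) (Fin n) K, ∀ i, mode3 M I i = 1) ↔
      (∃ x : Fin p → K, M.mulVec x = fun _ => 1) :=
  identity_exists_iff_allOnes_mem_range_general M hn
end

section
/- Let M ∈ K^{q×p} be full-rank with q ≤ p (invertible or surjective). Then for every n, the tensor rank of the tensor-tensor multiplication satisfies R(TM_{⟨n⟩,p,q}) ≤ q · R(M_⟨n⟩). -/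
open Matrix

/-- Tensor rank (bilinear complexity) of a bilinear map `T : U × V → W`. -/
noncomputable def tensorRank (K : Type*) [Field K] {U V W : Type*}
    [AddCommGroup U] [Module K U] [AddCommGroup V] [Module K V]
    [AddCommGroup W] [Module K W] (T : U → V → W) : ℕ :=
  sInf {r : ℕ | ∃ (α : Fin r → U →ₗ[K] K) (β : Fin r → V →ₗ[K] K) (w : Fin r → W),
    ∀ u v, T u v = ∑ i, (α i u * β i v) • w i}

/-!
Passing to the transform domain, `A *_M B` is the sum over the `q` frontal slices `k` of the product
of the `k`-th slices of `A ×₃ M` and `B ×₃ M`, placed in slice `k` and sent through `· ×₃ M⁺`. So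
`*_M` is a sum of `q` maps obtained from one matrix multiplication by composition with linear maps;
such a composition does not increase the rank, and ranks of sums are subadditive.
-/

section Rank

variable {K U V W U' V' W' ι κ : Type*}

section CommSemiring

variable [CommSemiring K] [AddCommMonoid U] [Module K U] [AddCommMonoid V] [Module K V]
  [AddCommMonoid W] [Module K W] [AddCommMonoid U'] [Module K U'] [AddCommMonoid V'] [Module K V']
  [AddCommMonoid W'] [Module K W']

variable (K) in
/-- The map `T` is a sum of `r` rank-one bilinear maps `(u, v) ↦ (α u * β v) • w`, so its tensor
rank is at most `r`. As `tensorRank` is an infimum in `ℕ`, equal to `0` when no decomposition exists,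
upper bounds on the rank are carried by this predicate rather than by an inequality. -/
def HasTensorRankLE (T : U → V → W) (r : ℕ) : Prop :=
  ∃ (α : Fin r → U →ₗ[K] K) (β : Fin r → V →ₗ[K] K) (w : Fin r → W),
    ∀ u v, T u v = ∑ i, (α i u * β i v) • w i

namespace HasTensorRankLE

theorem of_fintype [Fintype ι] {T : U → V → W} (α : ι → U →ₗ[K] K) (β : ι → V →ₗ[K] K)
    (w : ι → W) (hT : ∀ u v, T u v = ∑ i, (α i u * β i v) • w i) :
    HasTensorRankLE K T (Fintype.card ι) := by
  let e := (Fintype.equivFin ι).symm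
  refine ⟨α ∘ e, β ∘ e, w ∘ e, fun u v => ?_⟩
  rw [hT]
  exact (e.sum_comp fun i => (α i u * β i v) • w i).symm

theorem comp {T : U → V → W} {r : ℕ} (hT : HasTensorRankLE K T r)
    (f : U' →ₗ[K] U) (g : V' →ₗ[K] V) (h : W →ₗ[K] W') :
    HasTensorRankLE K (fun u v => h (T (f u) (g v))) r := by
  obtain ⟨α, β, w, hT⟩ := hT
  refine ⟨fun i => α i ∘ₗ f, fun i => β i ∘ₗ g, fun i => h (w i), fun u v => ?_⟩
  simp only [hT, map_sum, map_smul, LinearMap.comp_apply]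

theorem sum [Fintype ι] {T : ι → U → V → W} {r : ι → ℕ}
    (hT : ∀ k, HasTensorRankLE K (T k) (r k)) :
    HasTensorRankLE K (fun u v => ∑ k, T k u v) (∑ k, r k) := by
  choose α β w hT using hT
  have key := of_fintype (K := K) (T := fun u v => ∑ k, T k u v)
    (fun x : Σ k, Fin (r k) => α x.1 x.2) (fun x => β x.1 x.2) (fun x => w x.1 x.2)
    fun u v => by simp only [hT, Fintype.sum_sigma]
  simpa only [Fintype.card_sigma, Fintype.card_fin] using key

theorem of_basis [Fintype ι] [Fintype κ] (b : Module.Basis ι K U) (c : Module.Basis κ K V)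
    (T : U →ₗ[K] V →ₗ[K] W) :
    HasTensorRankLE K (fun u v => T u v) (Fintype.card ι * Fintype.card κ) := by
  rw [← Fintype.card_prod]
  refine of_fintype (fun x => b.coord x.1) (fun x => c.coord x.2) (fun x => T (b x.1) (c x.2))
    fun u v => ?_
  rw [← LinearMap.sum_repr_mul_repr_mul b c]
  simp only [Finsupp.sum_fintype, zero_smul, smul_zero, Finset.sum_const_zero, implies_true,
    Module.Basis.coord_apply, mul_smul, Fintype.sum_prod_type]

end HasTensorRankLE

end CommSemiring

variable [Field K] [AddCommGroup U] [Module K U] [AddCommGroup V] [Module K V]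
  [AddCommGroup W] [Module K W] [AddCommGroup U'] [Module K U'] [AddCommGroup V'] [Module K V']
  [AddCommGroup W'] [Module K W']

theorem HasTensorRankLE.tensorRank_le {T : U → V → W} {r : ℕ} (hT : HasTensorRankLE K T r) :
    tensorRank K T ≤ r :=
  Nat.sInf_le hT

theorem hasTensorRankLE_tensorRank [Module.Finite K U] [Module.Finite K V]
    (T : U →ₗ[K] V →ₗ[K] W) :
    HasTensorRankLE K (fun u v => T u v) (tensorRank K fun u v => T u v) :=
  Nat.sInf_mem (s := {r | HasTensorRankLE K (fun u v => T u v) r})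
    ⟨_, .of_basis (Module.finBasis K U) (Module.finBasis K V) T⟩

theorem tensorRank_sum_comp_le [Fintype ι] [Module.Finite K U] [Module.Finite K V]
    (T : U →ₗ[K] V →ₗ[K] W) (f : ι → U' →ₗ[K] U) (g : ι → V' →ₗ[K] V) (h : ι → W →ₗ[K] W') :
    tensorRank K (fun u v => ∑ k, h k (T (f k u) (g k v))) ≤
      Fintype.card ι * tensorRank K fun u v => T u v := by
  have hsum := HasTensorRankLE.sum fun k =>
    (hasTensorRankLE_tensorRank T).comp (f k) (g k) (h k)
  simpa only [Finset.sum_const, Finset.card_univ, smul_eq_mul] using hsum.tensorRank_le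

end Rank

section Transform

variable {K : Type*} [CommSemiring K] {m n s p q : ℕ}

/-- The mode-3 product `A ↦ A ×₃ M` as a linear map of third-order tensors. -/
def mode3Linear (m n : ℕ) (M : Matrix (Fin q) (Fin p) K) :
    (Fin p → Matrix (Fin m) (Fin n) K) →ₗ[K] Fin q → Matrix (Fin m) (Fin n) K where
  toFun := mode3 M
  map_add' A B := by
    funext k
    simp only [mode3, Pi.add_apply, smul_add, Finset.sum_add_distrib]
  map_smul' c A := by
    funext k
    simp only [mode3, Pi.smul_apply, RingHom.id_apply, Finset.smul_sum, smul_comm c]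

theorem tmul3_eq_sum (M : Matrix (Fin q) (Fin p) K) (N : Matrix (Fin p) (Fin q) K)
    (A : Fin p → Matrix (Fin m) (Fin n) K) (B : Fin p → Matrix (Fin n) (Fin s) K) :
    tmul3 M N A B =
      ∑ k, mode3Linear m s N (Pi.single k (mode3Linear m n M A k * mode3Linear n s M B k)) := by
  rw [← map_sum, Finset.univ_sum_single]
  rfl

end Transform

theorem tensorRank_tmul3_le_general {K : Type*} [Field K] {m n s p q : ℕ}
    (M : Matrix (Fin q) (Fin p) K) (N : Matrix (Fin p) (Fin q) K) :
    tensorRank K (fun (A : Fin p → Matrix (Fin m) (Fin n) K)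
        (B : Fin p → Matrix (Fin n) (Fin s) K) => tmul3 M N A B) ≤
      q * tensorRank K
        (fun (A : Matrix (Fin m) (Fin n) K) (B : Matrix (Fin n) (Fin s) K) => A * B) := by
  simpa only [tmul3_eq_sum, Fintype.card_fin] using!
    tensorRank_sum_comp_le (mulLinearMap K)
      (fun k : Fin q => LinearMap.proj k ∘ₗ mode3Linear m n M)
      (fun k => LinearMap.proj k ∘ₗ mode3Linear n s M)
      (fun k => mode3Linear m s N ∘ₗ LinearMap.single K _ k)

/-- for full-rank `M ∈ K^{q×p}` with `q ≤ p` (so `M M⁺ = I_q`),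
`R(TM_{⟨n⟩,p,q}) ≤ q · R(M_⟨n⟩)`. -/
theorem tensorRank_tmul3_le {K : Type*} [RCLike K] {p q : ℕ} (hq : q ≤ p)
    (M : Matrix (Fin q) (Fin p) K) (hrank : M.rank = q)
    (Mp : Matrix (Fin p) (Fin q) K) (hMp : M * Mp = 1) (n : ℕ) :
    tensorRank K (fun A B : Fin p → Matrix (Fin n) (Fin n) K => tmul3 M Mp A B) ≤
      q * tensorRank K (fun A B : Matrix (Fin n) (Fin n) K => A * B) :=
  tensorRank_tmul3_le_general M Mp
end
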